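/- (Henckell's theorem) Let S be a finite semigroup. A subset X of S is aperiodic-pointlike if and only if X belongs to Sat({{s} : s ∈ S}), the saturation of the collection of singleton subsets of S; that is, X is aperiodic-pointlike iff X belongs to every saturated collection of subsets of S that contains all singletons. -/

import Mathlib

open Pointwise

/-- The `n`-th power of an element of a semigroup, for `n ≥ 1` (with the junk value
`sgPow t 0 = t`). -/
def sgPow {T : Type} [Mul T] (t : T) : ℕ → T
  | 0 => t
  | 1 => t
  | (n+2) => sgPow t (n+1) * t

/-- A semigroup is aperiodic if for every element `t` there is `n ≥ 1` with
`t^(n+1) = t^n`. -/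
def IsAperiodic (T : Type) [Mul T] : Prop :=
  ∀ t : T, ∃ n, 1 ≤ n ∧ sgPow t (n + 1) = sgPow t n
/-- A relational morphism from `S` to `T`: a fully defined relation whose graph is
a subsemigroup of `S × T`. -/
def IsRelMorphism {S T : Type} [Mul S] [Mul T] (ρ : S → Set T) : Prop :=
  (∀ s, (ρ s).Nonempty) ∧ ∀ s s', ρ s * ρ s' ⊆ ρ (s * s')

/-- A subset `X` of a finite semigroup `S` is aperiodic-pointlike if every relational
morphism from `S` to a finite aperiodic semigroup `T` relates all of `X` to a single
element of `T`. -/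
def AperiodicPointlike {S : Type} [Semigroup S] (X : Set S) : Prop :=
  ∀ (T : Type) [Semigroup T] [Finite T], IsAperiodic T →
    ∀ ρ : S → Set T, IsRelMorphism ρ → ∃ t : T, X ⊆ {s : S | t ∈ ρ s}
/-- A collection `U` of subsets of a semigroup `S` is saturated if it is closed under
setwise products, under taking subsets, and under the operation sending `X ∈ U` to
`⋃_{k ≥ n} X^k` whenever `n ≥ 1` and the setwise power `X^n` is idempotent. -/
def Saturated {S : Type} [Semigroup S] (U : Set (Set S)) : Prop :=
  (∀ X ∈ U, ∀ Y ∈ U, X * Y ∈ U) ∧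
  (∀ X ∈ U, ∀ Y : Set S, Y ⊆ X → Y ∈ U) ∧
  (∀ X ∈ U, ∀ n, 1 ≤ n → sgPow X n * sgPow X n = sgPow X n → (⋃ k, ⋃ (_ : n ≤ k), sgPow X k) ∈ U)

/-- The saturation of a collection of subsets of `S`: the least saturated collection
containing it.  `X ∈ Sat U₀` iff `X` belongs to every saturated collection containing `U₀`. -/
def Sat {S : Type} [Semigroup S] (U₀ : Set (Set S)) : Set (Set S) :=
  {X | ∀ U : Set (Set S), Saturated U → U₀ ⊆ U → X ∈ U}

/-!
One direction is a direct check: the sets related to a common element by a relational morphism into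
an aperiodic semigroup form a saturated collection.

For the converse, let `U` be saturated with all singletons. Adjoining an identity turns `U` into a
finite ordered monoid `M` with an operator `π` such that `x ^ k ≤ π x` for large `k`, and
`u * c = c * v` implies `π u * c = c * π v`; here `π X = ⋃_{k ≥ N} X ^ k` for an exponent `N` making
all powers idempotent. We show that for every `f : A → M` with `A` finite there is an evaluation of
words over `A` in a finite aperiodic monoid `T` such that all words with the same value in `T` have
values under `f` below a common element of `M`. Applied to `s ↦ {s}`, this bounds a pointlike set
by a member of `U`.

The argument is an induction on the sizes of `M` and `A`. If all letters go to units, `T` is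
trivial: a unit `u` satisfies `1, u ≤ π u`, so a product of such elements bounds all units.
Otherwise let `f c` be a non-unit and cut words at the occurrences of `c`. The pieces between
occurrences are words over a smaller alphabet, and the sequence of pieces is evaluated in the local
divisor of `M` at `f c`, a strictly smaller monoid which inherits the order and the operator. The
two aperiodic monoids obtained by induction are combined in a Rees extension.
-/

/-! ### Powers -/

theorem sgPow_succ {T : Type} [Mul T] (t : T) {n : ℕ} (hn : 1 ≤ n) :
    sgPow t (n + 1) = sgPow t n * t := by
  obtain ⟨n, rfl⟩ := Nat.exists_eq_add_of_le' hn
  rfl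

theorem map_sgPow {T : Type} {M F : Type*} [Mul T] [Monoid M] [FunLike F T M] [MulHomClass F T M]
    (f : F) (t : T) {n : ℕ} (hn : 1 ≤ n) : f (sgPow t n) = f t ^ n := by
  induction n, hn using Nat.le_induction with
  | base => exact (pow_one _).symm
  | succ n hn ih => rw [sgPow_succ t hn, map_mul, ih, pow_succ]

theorem sgPow_eq_pow {T : Type} [Monoid T] (t : T) {n : ℕ} (hn : 1 ≤ n) : sgPow t n = t ^ n :=
  map_sgPow (MulHom.id T) t hn

theorem sgPow_add_mul_of_isIdempotentElem {T : Type} [Semigroup T] {t : T} {n k : ℕ} (hn : 1 ≤ n)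
    (h : IsIdempotentElem (sgPow t n)) (hk : n ≤ k) (j : ℕ) :
    sgPow t (k + n * j) = sgPow t k := by
  obtain ⟨r, rfl⟩ := Nat.exists_eq_add_of_le hk
  have h' : IsIdempotentElem ((t : WithOne T) ^ n) := by
    rw [← WithOne.coeMulHom_apply, ← map_sgPow _ _ hn]
    exact h.map WithOne.coeMulHom
  apply WithOne.coe_injective
  rw [← WithOne.coeMulHom_apply, ← WithOne.coeMulHom_apply, map_sgPow _ _ (by omega),
    map_sgPow _ _ (by omega), WithOne.coeMulHom_apply]
  calc (t : WithOne T) ^ (n + r + n * j)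
      = (t ^ n) ^ (j + 1) * t ^ r := by rw [← pow_mul, ← pow_add]; congr 1; ring
    _ = t ^ (n + r) := by rw [h'.pow_succ_eq, pow_add]

theorem exists_isIdempotentElem_pow {M : Type*} [Monoid M] [Finite M] (x : M) :
    ∃ n, 1 ≤ n ∧ IsIdempotentElem (x ^ n) := by
  let _ : TopologicalSpace M := ⊥
  have : DiscreteTopology M := ⟨rfl⟩
  obtain ⟨_, ⟨n, hn, rfl⟩, h⟩ := exists_idempotent_in_compact_subsemigroup
    (fun _ ↦ continuous_of_discreteTopology) ((x ^ ·) '' Set.Ici 1) (Set.nonempty_Ici.image _)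
    (Set.toFinite _).isCompact <| by
      rintro _ ⟨m, hm, rfl⟩ _ ⟨n, -, rfl⟩
      exact ⟨m + n, Nat.le_add_right_of_le hm, pow_add x m n⟩
  exact ⟨n, hn, h⟩

-- Apply the previous result to the identity function, in the finite monoid of functions `M → M`.
theorem exists_forall_isIdempotentElem_pow (M : Type*) [Monoid M] [Finite M] :
    ∃ n, 1 ≤ n ∧ ∀ x : M, IsIdempotentElem (x ^ n) := by
  obtain ⟨n, hn, h⟩ := exists_isIdempotentElem_pow (id : M → M)
  exact ⟨n, hn, congrFun h⟩

theorem isAperiodic_iff_exists_pow_succ_eq {T : Type} [Monoid T] :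
    IsAperiodic T ↔ ∀ t : T, ∃ n : ℕ, t ^ (n + 1) = t ^ n := by
  refine forall_congr' fun t ↦ ⟨fun ⟨n, hn, h⟩ ↦ ⟨n, ?_⟩, fun ⟨n, h⟩ ↦ ⟨n + 1, by omega, ?_⟩⟩
  · rwa [sgPow_eq_pow t (Nat.le_add_left 1 n), sgPow_eq_pow t hn] at h
  · rw [sgPow_eq_pow t (by omega), sgPow_eq_pow t (Nat.le_add_left 1 n), pow_succ, h, ← pow_succ, h]

theorem sgPow_eq_of_le {T : Type} [Mul T] {t : T} {m k : ℕ} (hm : 1 ≤ m)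
    (h : sgPow t (m + 1) = sgPow t m) (hk : m ≤ k) : sgPow t k = sgPow t m := by
  induction k, hk using Nat.le_induction with
  | base => rfl
  | succ k hk ih => rw [sgPow_succ t (by omega), ih, ← sgPow_succ t hm, h]

/-! ### Relational morphisms -/

namespace IsRelMorphism

theorem sgPow_subset {S T : Type} [Semigroup S] [Mul T] {ρ : S → Set T} (hρ : IsRelMorphism ρ)
    {X : Set S} {t : T} (h : X ⊆ {s | t ∈ ρ s}) {k : ℕ} (hk : 1 ≤ k) :
    sgPow X k ⊆ {s | sgPow t k ∈ ρ s} := by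
  induction k, hk using Nat.le_induction with
  | base => exact h
  | succ k hk ih =>
    rw [sgPow_succ X hk, sgPow_succ t hk]
    rintro _ ⟨x, hx, y, hy, rfl⟩
    exact hρ.2 x y (Set.mul_mem_mul (ih hx) (h hy))

theorem saturated {S T : Type} [Semigroup S] [Mul T] {ρ : S → Set T} (hρ : IsRelMorphism ρ)
    (hT : IsAperiodic T) : Saturated {X : Set S | ∃ t, X ⊆ {s | t ∈ ρ s}} := by
  refine ⟨?_, fun X ⟨t, ht⟩ Y hY ↦ ⟨t, hY.trans ht⟩, ?_⟩
  · rintro X ⟨t, ht⟩ Y ⟨t', ht'⟩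
    refine ⟨t * t', ?_⟩
    rintro _ ⟨x, hx, y, hy, rfl⟩
    exact hρ.2 x y (Set.mul_mem_mul (ht hx) (ht' hy))
  · rintro X ⟨t, ht⟩ n hn hX
    obtain ⟨m, hm, hm'⟩ := hT t
    refine ⟨sgPow t m, Set.iUnion₂_subset fun k hk ↦ ?_⟩
    have hmk : m ≤ k + n * m := le_add_left (Nat.le_mul_of_pos_left m hn)
    rw [← sgPow_add_mul_of_isIdempotentElem hn hX hk m, ← sgPow_eq_of_le hm hm' hmk]
    exact hρ.sgPow_subset ht (hm.trans hmk)

theorem of_mulHom {S T : Type} {F : Type*} [Mul S] [Mul T] [Mul F] (α : F →ₙ* S)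
    (hα : Function.Surjective α) (ψ : F →ₙ* T) : IsRelMorphism fun s ↦ ψ '' (α ⁻¹' {s}) := by
  refine ⟨fun s ↦ (Set.Nonempty.preimage (Set.singleton_nonempty s) hα).image ψ, ?_⟩
  rintro _ _ _ ⟨_, ⟨w, rfl, rfl⟩, _, ⟨w', rfl, rfl⟩, rfl⟩
  exact ⟨w * w', map_mul α w w', map_mul ψ w w'⟩

end IsRelMorphism

theorem aperiodicPointlike_of_mem_sat {S : Type} [Semigroup S] {X : Set S}
    (hX : X ∈ Sat {Y : Set S | ∃ s : S, Y = {s}}) : AperiodicPointlike X := by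
  intro T _ _ hT ρ hρ
  refine hX _ (hρ.saturated hT) ?_
  rintro _ ⟨s, rfl⟩
  obtain ⟨t, ht⟩ := hρ.1 s
  exact ⟨t, Set.singleton_subset_iff.2 ht⟩

theorem AperiodicPointlike.nonempty {S : Type} [Semigroup S] {X : Set S}
    (hX : AperiodicPointlike X) : Nonempty S := by
  by_contra hS
  rw [not_nonempty_iff] at hS
  obtain ⟨t, -⟩ := hX S isEmptyElim isEmptyElim ⟨isEmptyElim, isEmptyElim⟩
  exact isEmptyElim t

/-! ### Operators absorbing powers -/

/-- An operator `π` on a preordered monoid absorbs powers if `π x` dominates all large powers of `x`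
and `π` respects semiconjugacy. It abstracts the operation `X ↦ ⋃_{k ≥ n} X ^ k` of a saturated
collection. In the second condition `SemiconjBy c v u` says that `u * c = c * v`. -/
structure AbsorbsPowers {M : Type*} [Monoid M] [Preorder M] (π : M → M) : Prop where
  exists_pow_le (x : M) : ∃ n, ∀ k, n ≤ k → x ^ k ≤ π x
  semiconjBy {c v u : M} : SemiconjBy c v u → SemiconjBy c (π v) (π u)

namespace AbsorbsPowers

variable {M : Type*} [Monoid M] [Preorder M] {π : M → M}

theorem pow_le_of_isOfFinOrder (hπ : AbsorbsPowers π) {u : M} (hu : IsOfFinOrder u) (j : ℕ) :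
    u ^ j ≤ π u := by
  obtain ⟨n, hn⟩ := hπ.exists_pow_le u
  have h := hn (orderOf u * n + j) (le_add_right (Nat.le_mul_of_pos_left n hu.orderOf_pos))
  rwa [pow_add, pow_mul, pow_orderOf_eq_one, one_pow, one_mul] at h

theorem exists_forall_isUnit_le [Finite M] [MulLeftMono M] [MulRightMono M]
    (hπ : AbsorbsPowers π) : ∃ m : M, ∀ u, IsUnit u → u ≤ m := by
  have : IsDirectedOrder (Set.Ici (1 : M)) :=
    ⟨fun a b ↦ ⟨⟨a * b, one_le_mul a.2 b.2⟩, le_mul_of_one_le_right' b.2,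
      le_mul_of_one_le_left' a.2⟩⟩
  let f (u : {u : M // IsUnit u}) : Set.Ici (1 : M) :=
    ⟨π u, by simpa using hπ.pow_le_of_isOfFinOrder u.2.isOfFinOrder 0⟩
  obtain ⟨m, hm⟩ := Finite.exists_le f
  refine ⟨m, fun u hu ↦ le_trans ?_ (hm ⟨u, hu⟩)⟩
  simpa using hπ.pow_le_of_isOfFinOrder hu.isOfFinOrder 1

theorem restrict (hπ : AbsorbsPowers π) (N : Submonoid M) (hN : Set.MapsTo π N N) :
    AbsorbsPowers (hN.restrict π N N) where
  exists_pow_le x := hπ.exists_pow_le x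
  semiconjBy h := Subtype.ext (hπ.semiconjBy (congrArg Subtype.val h))

end AbsorbsPowers

/-! ### Local divisors -/

/-- The local divisor of a monoid `M` at `c`: the set `c M ∩ M c` with the multiplication
`u c ∘ c v = u c v` and the identity `c`. -/
@[ext]
structure LocalDivisor {M : Type*} [Monoid M] (c : M) where
  /-- The underlying element of the monoid. -/
  val : M
  exists_mul_eq : ∃ u, u * c = val
  exists_eq_mul : ∃ v, c * v = val

namespace LocalDivisor

variable {M : Type*} [Monoid M] {c : M}

noncomputable instance : Mul (LocalDivisor c) where
  mul x y :=
    { val := x.exists_mul_eq.choose * y.val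
      exists_mul_eq := by
        obtain ⟨u, hu⟩ := y.exists_mul_eq
        exact ⟨x.exists_mul_eq.choose * u, by rw [mul_assoc, hu]⟩
      exists_eq_mul := by
        obtain ⟨v, hv⟩ := x.exists_eq_mul
        obtain ⟨w, hw⟩ := y.exists_eq_mul
        exact ⟨v * w, by rw [← mul_assoc, hv, ← hw, ← mul_assoc, x.exists_mul_eq.choose_spec]⟩ }

theorem val_mul_of_eq_mul (x y : LocalDivisor c) {v : M} (hv : c * v = y.val) :
    (x * y).val = x.val * v := by
  change x.exists_mul_eq.choose * y.val = _
  rw [← hv, ← mul_assoc, x.exists_mul_eq.choose_spec]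

theorem val_mul_of_mul_eq (x y : LocalDivisor c) {u : M} (hu : u * c = x.val) :
    (x * y).val = u * y.val := by
  obtain ⟨v, hv⟩ := y.exists_eq_mul
  rw [val_mul_of_eq_mul x y hv, ← hu, ← hv, mul_assoc]

noncomputable instance : Monoid (LocalDivisor c) where
  mul_assoc x y z := by
    obtain ⟨u, hu⟩ := x.exists_mul_eq
    obtain ⟨v, hv⟩ := z.exists_eq_mul
    ext
    rw [val_mul_of_eq_mul _ z hv, val_mul_of_mul_eq x _ hu, val_mul_of_mul_eq x _ hu,
      val_mul_of_eq_mul y z hv, mul_assoc]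
  one := ⟨c, ⟨1, one_mul c⟩, ⟨1, mul_one c⟩⟩
  one_mul x := LocalDivisor.ext <| (val_mul_of_mul_eq _ x (one_mul c)).trans (one_mul x.val)
  mul_one x := LocalDivisor.ext <| (val_mul_of_eq_mul x _ (mul_one c)).trans (mul_one x.val)

theorem val_one : (1 : LocalDivisor c).val = c := rfl

theorem val_pow (x : LocalDivisor c) {u : M} (hu : u * c = x.val) (k : ℕ) :
    (x ^ k).val = u ^ k * c := by
  induction k with
  | zero => rw [pow_zero, pow_zero, val_one, one_mul]
  | succ k ih => rw [pow_succ', val_mul_of_mul_eq x _ hu, ih, pow_succ', mul_assoc]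

/-- The element `c m c` of the local divisor at `c`. -/
def sandwich (c m : M) : LocalDivisor c :=
  ⟨c * m * c, ⟨c * m, rfl⟩, ⟨m * c, (mul_assoc c m c).symm⟩⟩

theorem val_mul_sandwich_mul (x y : LocalDivisor c) (m : M) :
    (x * sandwich c m * y).val = x.val * m * y.val := by
  obtain ⟨u, hu⟩ := x.exists_mul_eq
  obtain ⟨v, hv⟩ := y.exists_eq_mul
  rw [val_mul_of_eq_mul _ y hv, val_mul_of_mul_eq x _ hu, ← hu, ← hv]
  simp only [sandwich, mul_assoc]

theorem val_injective : Function.Injective (val : LocalDivisor c → M) :=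
  fun _ _ ↦ LocalDivisor.ext

instance [Finite M] : Finite (LocalDivisor c) := Finite.of_injective val val_injective

theorem card_lt [Finite M] (hc : ¬ IsUnit c) : Nat.card (LocalDivisor c) < Nat.card M := by
  cases nonempty_fintype M
  have := Fintype.ofFinite (LocalDivisor c)
  rw [Nat.card_eq_fintype_card, Nat.card_eq_fintype_card]
  refine Fintype.card_lt_of_injective_of_notMem val val_injective (b := 1) ?_
  rintro ⟨x, hx⟩
  obtain ⟨u, hu⟩ := x.exists_mul_eq
  obtain ⟨v, hv⟩ := x.exists_eq_mul
  exact hc (isUnit_iff_exists_and_exists.2 ⟨⟨v, hv.trans hx⟩, u, hu.trans hx⟩)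

variable [Preorder M]

instance : Preorder (LocalDivisor c) := Preorder.lift val

instance [MulLeftMono M] : MulLeftMono (LocalDivisor c) where
  elim x y z h := by
    obtain ⟨u, hu⟩ := x.exists_mul_eq
    change (x * y).val ≤ (x * z).val
    rw [val_mul_of_mul_eq x y hu, val_mul_of_mul_eq x z hu]
    exact mul_le_mul_right (α := M) h u

instance [MulRightMono M] : MulRightMono (LocalDivisor c) where
  elim x y z h := by
    obtain ⟨v, hv⟩ := x.exists_eq_mul
    change (y * x).val ≤ (z * x).val
    rw [val_mul_of_eq_mul y x hv, val_mul_of_eq_mul z x hv]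
    exact mul_le_mul_left (α := M) h v

end LocalDivisor

-- On the local divisor the operator is `u * c ↦ π u * c`, which is also `c * v ↦ c * π v`.
theorem AbsorbsPowers.exists_localDivisor {M : Type*} [Monoid M] [Preorder M] [MulRightMono M]
    {π : M → M} (hπ : AbsorbsPowers π) (c : M) :
    ∃ π' : LocalDivisor c → LocalDivisor c, AbsorbsPowers π' := by
  have hπ_val (x : LocalDivisor c) : ∃ y : LocalDivisor c,
      (∀ u, u * c = x.val → π u * c = y.val) ∧ ∀ v, c * v = x.val → c * π v = y.val := by
    obtain ⟨u, hu⟩ := x.exists_mul_eq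
    obtain ⟨v, hv⟩ := x.exists_eq_mul
    have hcomm {u v : M} (hu : u * c = x.val) (hv : c * v = x.val) : c * π v = π u * c :=
      hπ.semiconjBy (hv.trans hu.symm)
    exact ⟨⟨π u * c, ⟨π u, rfl⟩, π v, hcomm hu hv⟩,
      fun u' hu' ↦ (hcomm hu' hv).symm.trans (hcomm hu hv), fun v' hv' ↦ hcomm hu hv'⟩
  choose π' hleft hright using hπ_val
  refine ⟨π', fun x ↦ ?_, fun {w y x} h ↦ ?_⟩
  · obtain ⟨u, hu⟩ := x.exists_mul_eq
    obtain ⟨n, hn⟩ := hπ.exists_pow_le u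
    refine ⟨n, fun k hk ↦ ?_⟩
    change (x ^ k).val ≤ (π' x).val
    rw [LocalDivisor.val_pow x hu, ← hleft x u hu]
    exact mul_le_mul_left (hn k hk) c
  · obtain ⟨u, hu⟩ := x.exists_mul_eq
    obtain ⟨v, hv⟩ := y.exists_eq_mul
    have hw : SemiconjBy w.val v u := by
      rw [SemiconjBy, ← LocalDivisor.val_mul_of_eq_mul w y hv, h.eq,
        LocalDivisor.val_mul_of_mul_eq x w hu]
    ext
    rw [LocalDivisor.val_mul_of_eq_mul w _ (hright y v hv),
      LocalDivisor.val_mul_of_mul_eq _ w (hleft x u hu)]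
    exact (hπ.semiconjBy hw).eq

/-! ### Rees extensions -/

/-- The Rees extension of a monoid `T` along `γ : T → T'`: the disjoint union of `T` and of the Rees
matrix semigroup over `T'` with rows and columns indexed by `T` and sandwich matrix
`(q, p) ↦ γ (q * p)`, on which `T` acts by left and right translations. -/
inductive ReesExtension {T T' : Type*} (γ : T → T') : Type _
  | base (a : T) : ReesExtension γ
  | rees (p : T) (x : T') (q : T) : ReesExtension γ

namespace ReesExtension

section Monoid

variable {T T' : Type*} [Monoid T] {γ : T → T'}

instance : One (ReesExtension γ) := ⟨base 1⟩

theorem one_def : (1 : ReesExtension γ) = base 1 := rfl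

variable [Monoid T']

instance : Mul (ReesExtension γ) where
  mul
    | base a, base b => base (a * b)
    | base a, rees p x q => rees (a * p) x q
    | rees p x q, base b => rees p x (q * b)
    | rees p x q, rees p' x' q' => rees p (x * γ (q * p') * x') q'

theorem base_mul_base (a b : T) : (base a * base b : ReesExtension γ) = base (a * b) := rfl

theorem base_mul_rees (a p : T) (x : T') (q : T) :
    (base a * rees p x q : ReesExtension γ) = rees (a * p) x q := rfl

theorem rees_mul_base (p : T) (x : T') (q b : T) :
    (rees p x q * base b : ReesExtension γ) = rees p x (q * b) := rfl

theorem rees_mul_rees (p : T) (x : T') (q p' : T) (x' : T') (q' : T) :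
    (rees p x q * rees p' x' q' : ReesExtension γ) = rees p (x * γ (q * p') * x') q' := rfl

instance : Monoid (ReesExtension γ) where
  mul_assoc a b c := by
    cases a <;> cases b <;> cases c <;>
      simp only [base_mul_base, base_mul_rees, rees_mul_base, rees_mul_rees, mul_assoc]
  one_mul a := by cases a <;> simp only [one_def, base_mul_base, base_mul_rees, one_mul]
  mul_one a := by cases a <;> simp only [one_def, base_mul_base, rees_mul_base, mul_one]

theorem base_pow (a : T) (k : ℕ) : (base a : ReesExtension γ) ^ k = base (a ^ k) := by
  induction k with
  | zero => rw [pow_zero, pow_zero, one_def]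
  | succ k ih => rw [pow_succ, ih, base_mul_base, pow_succ]

theorem rees_pow_succ (p : T) (x : T') (q : T) (k : ℕ) :
    (rees p x q : ReesExtension γ) ^ (k + 1) = rees p ((x * γ (q * p)) ^ k * x) q := by
  induction k with
  | zero => rw [pow_one, pow_zero, one_mul]
  | succ k ih => rw [pow_succ', ih, rees_mul_rees, pow_succ', mul_assoc _ _ x]

end Monoid

instance {T T' : Type*} [Finite T] [Finite T'] (γ : T → T') : Finite (ReesExtension γ) := by
  refine Finite.of_surjective
    (Sum.elim base fun z ↦ rees z.1 z.2.1 z.2.2 : T ⊕ T × T' × T → ReesExtension γ) ?_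
  rintro (a | ⟨p, x, q⟩)
  exacts [⟨.inl a, rfl⟩, ⟨.inr (p, x, q), rfl⟩]

theorem isAperiodic {T T' : Type} [Monoid T] [Monoid T'] (γ : T → T') (hT : IsAperiodic T)
    (hT' : IsAperiodic T') : IsAperiodic (ReesExtension γ) := by
  rw [isAperiodic_iff_exists_pow_succ_eq] at *
  rintro (a | ⟨p, x, q⟩)
  · obtain ⟨n, hn⟩ := hT a
    exact ⟨n, by rw [base_pow, base_pow, hn]⟩
  · obtain ⟨n, hn⟩ := hT' (x * γ (q * p))
    exact ⟨n + 1, by rw [rees_pow_succ, rees_pow_succ, hn]⟩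

end ReesExtension

/-! ### Aperiodic bounds -/

/-- A homomorphism `φ` to a preordered monoid is aperiodically bounded if, for some homomorphism `ψ`
to a finite aperiodic monoid, each fibre of `ψ` has a `φ`-image that is bounded above. -/
def AperiodicallyBounded {F M : Type*} [Monoid F] [Monoid M] [Preorder M] (φ : F →* M) : Prop :=
  ∃ (T : Type) (_ : Monoid T) (_ : Finite T) (ψ : F →* T) (m : T → M),
    IsAperiodic T ∧ ∀ w, φ w ≤ m (ψ w)

section Tracks

variable {F M T T' : Type*} [Monoid F] [Monoid M] [Preorder M] [Monoid T] [Monoid T'] {c : M}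

/-- The relation between the value of a word in a Rees extension and its value in `M`, for a word
cut at the occurrences of a letter with value `c`: the pieces are evaluated by `φ` and `ψ`, and the
sequence `l` of the `ψ`-values of the inner pieces is evaluated by `φ'` and `ψ'`. The value in `M`
is only required to be at most the product obtained in this way. -/
inductive Tracks (φ : F →* M) (ψ : F →* T) (φ' : FreeMonoid T →* LocalDivisor c)
    (ψ' : FreeMonoid T →* T') : ReesExtension (fun t ↦ ψ' (FreeMonoid.of t)) → M → Prop
  | base (v : F) : Tracks φ ψ φ' ψ' (.base (ψ v)) (φ v)
  | rees (v : F) (l : FreeMonoid T) (v' : F) {x : M} (hx : x ≤ φ v * (φ' l).val * φ v') :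
      Tracks φ ψ φ' ψ' (.rees (ψ v) (ψ' l) (ψ v')) x

namespace Tracks

variable {φ : F →* M} {ψ : F →* T} {φ' : FreeMonoid T →* LocalDivisor c} {ψ' : FreeMonoid T →* T'}
  {m : T → M} {n : T' → LocalDivisor c} {z z' : ReesExtension fun t ↦ ψ' (FreeMonoid.of t)}
  {x x' : M}

theorem one : Tracks φ ψ φ' ψ' 1 1 := by
  simpa only [map_one, ReesExtension.one_def] using
    base (φ := φ) (ψ := ψ) (φ' := φ') (ψ' := ψ') 1

theorem rees_one : Tracks φ ψ φ' ψ' (.rees 1 1 1) c := by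
  have h : c ≤ φ 1 * (φ' 1).val * φ 1 := by
    simp only [map_one, LocalDivisor.val_one, one_mul, mul_one, le_refl]
  simpa only [map_one] using rees (ψ := ψ) (ψ' := ψ') 1 1 1 h

theorem mul [MulLeftMono M] [MulRightMono M] (hm : ∀ v, φ v ≤ m (ψ v))
    (hφ' : ∀ t, φ' (FreeMonoid.of t) = LocalDivisor.sandwich c (m t))
    (h : Tracks φ ψ φ' ψ' z x) (h' : Tracks φ ψ φ' ψ' z' x') :
    Tracks φ ψ φ' ψ' (z * z') (x * x') := by
  cases h with
  | base v =>
    cases h' with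
    | base w =>
      rw [ReesExtension.base_mul_base, ← map_mul, ← map_mul]
      exact base (v * w)
    | rees w l w' hx' =>
      rw [ReesExtension.base_mul_rees, ← map_mul]
      refine rees (v * w) l w' ?_
      calc φ v * x' ≤ φ v * (φ w * (φ' l).val * φ w') := by gcongr
        _ = φ (v * w) * (φ' l).val * φ w' := by simp only [map_mul, mul_assoc]
  | rees v l v' hx =>
    cases h' with
    | base w =>
      rw [ReesExtension.rees_mul_base, ← map_mul]
      refine rees v l (v' * w) ?_
      calc x * φ w ≤ φ v * (φ' l).val * φ v' * φ w := by gcongr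
        _ = φ v * (φ' l).val * φ (v' * w) := by simp only [map_mul, mul_assoc]
    | rees w k w' hx' =>
      rw [ReesExtension.rees_mul_rees, ← map_mul, ← map_mul, ← map_mul]
      refine rees v (l * FreeMonoid.of (ψ (v' * w)) * k) w' ?_
      calc x * x' ≤ φ v * (φ' l).val * φ v' * (φ w * (φ' k).val * φ w') := mul_le_mul' hx hx'
        _ = φ v * ((φ' l).val * φ (v' * w) * (φ' k).val) * φ w' := by
          simp only [map_mul, mul_assoc]
        _ ≤ φ v * ((φ' l).val * m (ψ (v' * w)) * (φ' k).val) * φ w' := by gcongr; exact hm _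
        _ = φ v * (φ' (l * FreeMonoid.of (ψ (v' * w)) * k)).val * φ w' := by
          rw [map_mul φ', map_mul φ', hφ', LocalDivisor.val_mul_sandwich_mul]

theorem exists_bound [MulLeftMono M] [MulRightMono M] (hm : ∀ v, φ v ≤ m (ψ v))
    (hn : ∀ l, φ' l ≤ n (ψ' l)) (z : ReesExtension fun t ↦ ψ' (FreeMonoid.of t)) :
    ∃ b, ∀ x, Tracks φ ψ φ' ψ' z x → x ≤ b := by
  cases z with
  | base t => exact ⟨m t, fun x h ↦ by cases h; exact hm _⟩
  | rees p y q =>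
    refine ⟨m p * (n y).val * m q, fun x h ↦ ?_⟩
    cases h with
    | rees v l v' hx => exact hx.trans (mul_le_mul' (mul_le_mul' (hm v) (hn l)) (hm v'))

end Tracks

end Tracks

namespace AperiodicallyBounded

variable {M : Type*} [Monoid M] [Preorder M]

theorem of_forall_le {F : Type*} [Monoid F] {φ : F →* M} {m : M} (h : ∀ w, φ w ≤ m) :
    AperiodicallyBounded φ :=
  ⟨Unit, inferInstance, inferInstance, 1, fun _ ↦ m, fun _ ↦ ⟨1, le_rfl, rfl⟩, h⟩

theorem of_localDivisor [MulLeftMono M] [MulRightMono M] {A : Type*} (f : A → M) (c : A)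
    (hB : AperiodicallyBounded (FreeMonoid.lift fun b : {a // a ≠ c} ↦ f b))
    (hL : ∀ (B : Type) [Finite B] (g : B → LocalDivisor (f c)),
      AperiodicallyBounded (FreeMonoid.lift g)) :
    AperiodicallyBounded (FreeMonoid.lift f) := by
  classical
  obtain ⟨T, _, _, ψ, m, hT, hm⟩ := hB
  obtain ⟨T', _, _, ψ', n, hT', hn⟩ := hL T fun t ↦ LocalDivisor.sandwich (f c) (m t)
  let γ (t : T) : T' := ψ' (FreeMonoid.of t)
  let g (a : A) : ReesExtension γ :=
    if h : a = c then .rees 1 1 1 else .base (ψ (FreeMonoid.of ⟨a, h⟩))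
  have htracks (w : FreeMonoid A) :
      Tracks (FreeMonoid.lift fun b : {a // a ≠ c} ↦ f b) ψ
        (FreeMonoid.lift fun t ↦ LocalDivisor.sandwich (f c) (m t)) ψ'
        (FreeMonoid.lift g w) (FreeMonoid.lift f w) := by
    induction w using FreeMonoid.inductionOn with
    | one => rw [map_one, map_one]; exact .one
    | of a =>
      rw [FreeMonoid.lift_eval_of, FreeMonoid.lift_eval_of]
      by_cases h : a = c
      · simp only [g, dif_pos h]
        rw [h]
        exact .rees_one
      · simp only [g, dif_neg h]
        exact .base (φ := FreeMonoid.lift fun b : {a // a ≠ c} ↦ f b) (FreeMonoid.of ⟨a, h⟩)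
    | mul w w' h h' =>
      rw [map_mul, map_mul]
      exact h.mul hm (fun t ↦ FreeMonoid.lift_eval_of _ t) h'
  choose bound hbound using Tracks.exists_bound hm hn
  exact ⟨ReesExtension γ, inferInstance, inferInstance, FreeMonoid.lift g, bound,
    ReesExtension.isAperiodic γ hT hT', fun w ↦ hbound _ _ (htracks w)⟩

end AperiodicallyBounded

theorem AbsorbsPowers.aperiodicallyBounded {M : Type*} [Monoid M] [Preorder M] [MulLeftMono M]
    [MulRightMono M] [Finite M] {π : M → M} (hπ : AbsorbsPowers π) {A : Type} [Finite A]
    (f : A → M) : AperiodicallyBounded (FreeMonoid.lift f) := by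
  by_cases hf : ∀ a, IsUnit (f a)
  · obtain ⟨m, hm⟩ := hπ.exists_forall_isUnit_le
    refine .of_forall_le fun w ↦ hm _ ?_
    induction w using FreeMonoid.inductionOn with
    | one => exact isUnit_one.map _
    | of a => exact hf a
    | mul w w' h h' => exact map_mul (FreeMonoid.lift f) w w' ▸ h.mul h'
  · push Not at hf
    obtain ⟨c, hc⟩ := hf
    obtain ⟨π', hπ'⟩ := hπ.exists_localDivisor (f c)
    exact .of_localDivisor f c (hπ.aperiodicallyBounded _) fun B _ g ↦ hπ'.aperiodicallyBounded g
termination_by (Nat.card M, Nat.card A)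
decreasing_by
  · exact .right _ (Finite.card_subtype_lt (not_not.2 rfl))
  · exact .left _ _ (LocalDivisor.card_lt hc)

/-! ### The ordered monoid of a saturated collection -/

section powTail

variable {R : Type*} [Monoid R]

/-- The union of the powers of exponent at least `N` of a subset of a monoid. -/
def powTail (N : ℕ) (X : Set R) : Set R := ⋃ k, ⋃ (_ : N ≤ k), X ^ k

theorem powTail_one (N : ℕ) : powTail N (1 : Set R) = 1 := by
  simp only [powTail, one_pow]
  exact Set.biUnion_const ⟨N, le_rfl⟩ 1

theorem absorbsPowers_powTail (N : ℕ) : AbsorbsPowers (powTail N : Set R → Set R) where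
  exists_pow_le X := ⟨N, fun k hk ↦ Set.subset_iUnion₂ (s := fun k (_ : N ≤ k) ↦ X ^ k) k hk⟩
  semiconjBy {c v u} h := by
    simp only [SemiconjBy, powTail, Set.mul_iUnion, Set.iUnion_mul, (h.pow_right _).eq]

end powTail

/-- The embedding of the power semigroup of `S` into the power semigroup of `S` with an identity
adjoined. -/
def imageWithOne {S : Type*} [Mul S] : Set S →ₙ* Set (WithOne S) where
  toFun X := (↑) '' X
  map_mul' _ _ := Set.image_mul WithOne.coeMulHom

theorem imageWithOne_injective {S : Type*} [Mul S] :
    Function.Injective (imageWithOne : Set S →ₙ* Set (WithOne S)) :=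
  Set.image_injective.2 WithOne.coe_injective

theorem powTail_imageWithOne {S : Type} [Semigroup S] {N : ℕ} (hN : 1 ≤ N) (X : Set S) :
    powTail N (imageWithOne X) = imageWithOne (⋃ k, ⋃ (_ : N ≤ k), sgPow X k) :=
  (Set.iUnion₂_congr fun _ hk ↦ (map_sgPow imageWithOne X (hN.trans hk)).symm).trans
    (Set.image_iUnion₂ _ _).symm

instance {M : Type*} [Monoid M] [Preorder M] [MulLeftMono M] (N : Submonoid M) : MulLeftMono N where
  elim a _ _ h := mul_le_mul_right (α := M) h a

instance {M : Type*} [Monoid M] [Preorder M] [MulRightMono M] (N : Submonoid M) :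
    MulRightMono N where
  elim a _ _ h := mul_le_mul_left (α := M) h a

namespace Saturated

variable {S : Type} [Semigroup S] {U : Set (Set S)}

/-- The monoid obtained from a saturated collection by adjoining an identity, realized by subsets of
`WithOne S`. -/
def adjoinOne (hU : Saturated U) : Submonoid (Set (WithOne S)) where
  carrier := insert 1 (imageWithOne '' U)
  one_mem' := Set.mem_insert _ _
  mul_mem' := by
    rintro _ _ (rfl | ⟨X, hX, rfl⟩) (rfl | ⟨Y, hY, rfl⟩)
    · exact .inl (mul_one 1)
    · exact .inr ⟨Y, hY, (one_mul _).symm⟩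
    · exact .inr ⟨X, hX, (mul_one _).symm⟩
    · exact .inr ⟨X * Y, hU.1 X hX Y hY, map_mul imageWithOne X Y⟩

theorem mapsTo_powTail (hU : Saturated U) {N : ℕ} (hN : 1 ≤ N)
    (hpow : ∀ Z : Set (WithOne S), IsIdempotentElem (Z ^ N)) :
    Set.MapsTo (powTail N) (hU.adjoinOne : Set (Set (WithOne S))) hU.adjoinOne := by
  rintro _ (rfl | ⟨X, hX, rfl⟩)
  · exact .inl (powTail_one N)
  · have hidem : sgPow X N * sgPow X N = sgPow X N := by
      apply imageWithOne_injective
      rw [map_mul, map_sgPow _ _ hN, hpow]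
    exact .inr ⟨_, hU.2.2 X hX N hN hidem, (powTail_imageWithOne hN X).symm⟩

theorem exists_absorbsPowers [Finite S] (hU : Saturated U) :
    ∃ π : hU.adjoinOne → hU.adjoinOne, AbsorbsPowers π := by
  have : Finite (WithOne S) := inferInstanceAs (Finite (Option S))
  obtain ⟨N, hN, hpow⟩ := exists_forall_isIdempotentElem_pow (Set (WithOne S))
  exact ⟨_, (absorbsPowers_powTail N).restrict _ (hU.mapsTo_powTail hN hpow)⟩

theorem mem_of_imageWithOne_subset (hU : Saturated U) (hempty : ∅ ∈ U) {X : Set S}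
    {Z : Set (WithOne S)} (hZ : Z ∈ hU.adjoinOne) (hX : imageWithOne X ⊆ Z) : X ∈ U := by
  rcases hZ with rfl | ⟨Y, hY, rfl⟩
  · have : X = ∅ := Set.eq_empty_of_forall_notMem fun s hs ↦
      WithOne.coe_ne_one (hX (Set.mem_image_of_mem _ hs))
    rwa [this]
  · exact hU.2.1 Y hY X ((Set.image_subset_image_iff WithOne.coe_injective).1 hX)

theorem mem_of_aperiodicPointlike [Finite S] (hU : Saturated U) (hsing : ∀ s, {s} ∈ U) {X : Set S}
    (hX : AperiodicPointlike X) : X ∈ U := by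
  have : Finite (WithOne S) := inferInstanceAs (Finite (Option S))
  obtain ⟨s₀⟩ := hX.nonempty
  obtain ⟨π, hπ⟩ := hU.exists_absorbsPowers
  let f (s : S) : hU.adjoinOne := ⟨imageWithOne {s}, .inr ⟨{s}, hsing s, rfl⟩⟩
  obtain ⟨T, _, _, ψ, m, hT, hm⟩ := hπ.aperiodicallyBounded f
  let eval : FreeSemigroup S →ₙ* S := FreeSemigroup.lift id
  let ι : FreeSemigroup S →ₙ* FreeMonoid S := FreeSemigroup.lift FreeMonoid.of
  have heval : Function.Surjective eval := fun s ↦ ⟨.of s, rfl⟩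
  have hf (w : FreeSemigroup S) : (FreeMonoid.lift f (ι w)).1 = imageWithOne {eval w} := by
    induction w with
    | ih1 s => rfl
    | ih2 s w hs hw =>
      rw [map_mul, map_mul, map_mul, Submonoid.coe_mul, hs, hw, ← map_mul,
        Set.singleton_mul_singleton]
  obtain ⟨t, ht⟩ := hX T hT _ (IsRelMorphism.of_mulHom eval heval (ψ.toMulHom.comp ι))
  refine hU.mem_of_imageWithOne_subset (hU.2.1 {s₀} (hsing s₀) ∅ (Set.empty_subset _)) (m t).2 ?_
  rintro _ ⟨s, hs, rfl⟩
  obtain ⟨w, hw, rfl⟩ := ht hs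
  have hle : (FreeMonoid.lift f (ι w)).1 ⊆ (m (ψ (ι w))).1 := hm (ι w)
  rw [hf] at hle
  exact hle ⟨s, hw.symm, rfl⟩

end Saturated

/-- Henckell's theorem.  A subset `X` of a finite semigroup `S` is
aperiodic-pointlike if and only if `X` belongs to the saturation of the collection of
singleton subsets of `S`. -/
theorem henckell_aperiodic_pointlikes
    (S : Type) [Semigroup S] [Finite S] (X : Set S) :
    AperiodicPointlike X ↔ X ∈ Sat {Y : Set S | ∃ s : S, Y = {s}} := by
  exact ⟨fun hX _ hU hsing ↦ hU.mem_of_aperiodicPointlike (fun s ↦ hsing ⟨s, rfl⟩) hX,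
    aperiodicPointlike_of_mem_sat⟩
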